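/- Let K, L be plane convex bodies, and let r(L,K) = sup{t ≥ 0 : x + tK ⊆ L for some x} and R(L,K) = inf{t ≥ 0 : x + tK ⊇ L for some x}. Then for every t ∈ [r(L,K), R(L,K)], vol(L) − 2t·V(L,K) + t²·vol(K) ≤ 0. -/

import Mathlib

open Real Set MeasureTheory
open scoped Pointwise

/-!
The function `t ↦ vol(L) - 2 t V(L, K) + t² vol(K)` is convex and its value is `≤ 0` exactly when
`2 (vol(L) + vol(t K)) ≤ vol(L + t K)`. So it suffices to prove the latter at `t = r(L, K)` and at
`t = R(L, K)`, and since `R(L, K) = r(K, L)⁻¹` the first case, with the roles of `K` and `L`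
exchanged and rescaled, also gives the second.

Put `A = L`, and let `B ⊆ A` be a maximal homothetic copy of `K`. By maximality the outer normals
of `A` at the points where `B` touches the boundary of `A` have `0` in their convex hull, since
otherwise `B` could be pushed into the interior of `A` and enlarged. By Carathéodory there are
two opposite contact normals or three, pairwise independent, with sum `0`.

* If two bodies have the same image under a nonzero functional, then slicing along its level lines
  and applying the one-dimensional Brunn-Minkowski inequality to the slices over `x` and the slice
  of the sum over `2 x` gives `2 (vol(A) + vol(B)) ≤ vol(A + B)`. This settles opposite normals.
* With three normals, cut `A` and `B` along the sides of the triangle of contact points. A line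
  cut is harmless, because the sums of the parts on either side overlap in a line only. Each cap
  that is cut off is sliced as before, parallel to the line joining the midpoint of the chord to the
  intersection of the supporting lines. What remains in both bodies is the triangle itself.
-/

open Module

/-- `2 (μ A + μ B) ≤ μ (A + B)`: for plane convex bodies, where `μ (A + B) = μ A + 2 V(A, B) + μ B`,
this is the inequality `μ A - 2 V(A, B) + μ B ≤ 0`, stated without reference to mixed areas. -/
def BonnesenPair {E : Type*} [Add E] [MeasurableSpace E] (μ : Measure E) (A B : Set E) : Prop :=
  2 * (μ A + μ B) ≤ μ (A + B)

theorem BonnesenPair.symm {E : Type*} [AddCommSemigroup E] [MeasurableSpace E] {μ : Measure E}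
    {A B : Set E} (h : BonnesenPair μ A B) : BonnesenPair μ B A := by
  rwa [BonnesenPair, add_comm (μ B), add_comm B]

theorem BonnesenPair.of_singleton_add {E : Type*} [AddCommGroup E] [MeasurableSpace E]
    [MeasurableAdd E] {μ : Measure E} [μ.IsAddLeftInvariant] {A B : Set E} {x : E}
    (h : BonnesenPair μ A ({x} + B)) : BonnesenPair μ A B := by
  have hμ (S : Set E) : μ ({x} + S) = μ S := by
    simp [singleton_add]
  simpa only [BonnesenPair, add_left_comm A, hμ] using h

theorem BonnesenPair.of_measure_eq_zero {E : Type*} [Add E] [MeasurableSpace E] {μ : Measure E}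
    {A B : Set E} (hBA : B ⊆ A) (hA : μ A = 0) : BonnesenPair μ A B := by
  simp [BonnesenPair, hA, measure_mono_null hBA hA]

theorem volume_add_volume_le_volume_add {A B : Set ℝ} (hA : IsCompact A) (hB : IsCompact B)
    (hA₀ : A.Nonempty) (hB₀ : B.Nonempty) : volume A + volume B ≤ volume (A + B) := by
  obtain ⟨a, haA, ha⟩ := hA.exists_isGreatest hA₀
  obtain ⟨b, hbB, hb⟩ := hB.exists_isLeast hB₀
  have hmeas : MeasurableSet (a +ᵥ B) := (hB.vadd a).isClosed.measurableSet
  have hoverlap : (b +ᵥ A) ∩ (a +ᵥ B) ⊆ {a + b} := by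
    rintro x ⟨⟨y, hy, rfl⟩, z, hz, hzx⟩
    have := ha hy
    have := hb hz
    simp only [vadd_eq_add, mem_singleton_iff] at *
    linarith
  have hsub : (b +ᵥ A) ∪ (a +ᵥ B) ⊆ A + B := by
    rintro x (⟨y, hy, rfl⟩ | ⟨y, hy, rfl⟩)
    · exact ⟨y, hy, b, hbB, add_comm y b⟩
    · exact ⟨a, haA, y, hy, rfl⟩
  calc volume A + volume B = volume (b +ᵥ A) + volume (a +ᵥ B) := by simp only [measure_vadd]
    _ = volume ((b +ᵥ A) ∪ (a +ᵥ B)) := by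
      rw [← measure_union_add_inter _ hmeas, measure_mono_null hoverlap volume_singleton, add_zero]
    _ ≤ volume (A + B) := measure_mono hsub

theorem isCompact_preimage_prodMk {X Y : Type*} [TopologicalSpace X] [TopologicalSpace Y]
    [T2Space X] [T2Space Y] {S : Set (X × Y)} (hS : IsCompact S) (x : X) :
    IsCompact (Prod.mk x ⁻¹' S) :=
  (hS.image continuous_snd).of_isClosed_subset (hS.isClosed.preimage (by fun_prop))
    fun y hy => ⟨(x, y), hy, rfl⟩

theorem two_mul_lintegral_comp_two_mul (F : ℝ → ENNReal) :
    2 * ∫⁻ x, F (2 * x) = ∫⁻ x, F x := by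
  conv_rhs => rw [← Real.smul_map_volume_mul_left (two_ne_zero' ℝ), lintegral_smul_measure,
    (measurableEmbedding_mulLeft₀ (two_ne_zero' ℝ)).lintegral_map]
  simp

theorem BonnesenPair.of_image_fst_eq {A B : Set (ℝ × ℝ)} (hA : IsCompact A) (hB : IsCompact B)
    (h : Prod.fst '' A = Prod.fst '' B) : BonnesenPair volume A B := by
  have hslice (x : ℝ) : volume (Prod.mk x ⁻¹' A) + volume (Prod.mk x ⁻¹' B) ≤
      volume (Prod.mk (2 * x) ⁻¹' (A + B)) := by
    by_cases hx : x ∈ Prod.fst '' A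
    · obtain ⟨⟨_, b⟩, hb, rfl⟩ := h ▸ hx
      obtain ⟨⟨_, a⟩, ha, rfl⟩ := hx
      refine (volume_add_volume_le_volume_add (isCompact_preimage_prodMk hA _)
        (isCompact_preimage_prodMk hB _) ⟨a, ha⟩ ⟨b, hb⟩).trans (measure_mono ?_)
      rintro _ ⟨y, hy, z, hz, rfl⟩
      exact ⟨_, hy, _, hz, by simp [two_mul]⟩
    · have hempty (S : Set (ℝ × ℝ)) (hS : x ∉ Prod.fst '' S) : Prod.mk x ⁻¹' S = ∅ :=
        eq_empty_of_forall_notMem fun y hy => hS ⟨_, hy, rfl⟩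
      simp [hempty A hx, hempty B (h ▸ hx)]
  rw [BonnesenPair, Measure.volume_eq_prod, Measure.prod_apply hA.measurableSet,
    Measure.prod_apply hB.measurableSet, Measure.prod_apply (hA.add hB).measurableSet,
    ← lintegral_add_left (measurable_measure_prodMk_left hA.measurableSet),
    ← two_mul_lintegral_comp_two_mul fun x => volume (Prod.mk x ⁻¹' (A + B))]
  gcongr with x
  exact hslice x

section Functionals

variable {E : Type*} [NormedAddCommGroup E] [NormedSpace ℝ E] {A : Set E} {f g h : StrongDual ℝ E}
  {p q r v : E}

theorem surjective_of_ne_zero (hf : f ≠ 0) : Function.Surjective f :=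
  LinearMap.surjective (ContinuousLinearMap.coe_injective.ne hf)

theorem exists_equiv_prod_fst_eq [FiniteDimensional ℝ E] (hE : finrank ℝ E = 2) (hf : f ≠ 0) :
    ∃ e : E ≃L[ℝ] ℝ × ℝ, ∀ x, (e x).1 = f x := by
  have hrange : f.range = ⊤ := LinearMap.range_eq_top.2 (surjective_of_ne_zero hf)
  obtain ⟨s, hs⟩ := f.exists_rightInverse_of_surjective hrange
  have hker : finrank ℝ f.ker = finrank ℝ ℝ := by
    have := f.toLinearMap.finrank_range_add_finrank_ker
    rw [hrange, finrank_top, hE, finrank_self] at this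
    rw [finrank_self]
    omega
  let e₀ := ContinuousLinearEquiv.equivOfRightInverse f s fun x => congr($hs x)
  exact ⟨e₀.trans (.prodCongr (.refl ℝ ℝ) (.ofFinrankEq hker)), fun x => rfl⟩

theorem finrank_strongDual (E : Type*) [NormedAddCommGroup E] [NormedSpace ℝ E]
    [FiniteDimensional ℝ E] : finrank ℝ (StrongDual ℝ E) = finrank ℝ E :=
  (LinearMap.toContinuousLinearMap (𝕜 := ℝ) (E := E) (F' := ℝ)).finrank_eq.symm.trans
    Subspace.dual_finrank_eq

theorem eq_of_apply_eq_of_linearIndependent [FiniteDimensional ℝ E] (hE : finrank ℝ E = 2)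
    (hfg : LinearIndependent ℝ ![f, g]) (hf : f p = f q) (hg : g p = g q) : p = q := by
  have hspan : Submodule.span ℝ {f, g} = ⊤ := by
    have hcard : Fintype.card (Fin 2) = finrank ℝ (StrongDual ℝ E) := by
      simp [finrank_strongDual, hE]
    simpa [pair_comm g f] using hfg.span_eq_top_of_card_eq_finrank' hcard
  refine (SeparatingDual.eq_iff_forall_dual_eq (R := ℝ)).2 fun k => ?_
  obtain ⟨a, b, rfl⟩ := Submodule.mem_span_pair.1 (hspan ▸ Submodule.mem_top : k ∈ _)
  simp [hf, hg]

theorem linearIndependent_pair_of_add_eq_zero (hfg : LinearIndependent ℝ ![f, g])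
    (h₀ : f + g + h = 0) : LinearIndependent ℝ ![g, h] := by
  rw [eq_neg_of_add_eq_zero_right h₀, add_comm, LinearIndependent.pair_neg_right_iff,
    LinearIndependent.pair_add_right_iff, LinearIndependent.pair_symm_iff]
  exact hfg

/-- The contraction `(f ∧ g)(v, ·)` of the 2-form `f ∧ g`. For linearly independent `f`, `g` on a
plane it is the functional, unique up to scaling, with kernel `ℝ v`; being the same for all pairs of
functionals with the same `f ∧ g`, it orients the lines `ℝ v` coherently. -/
def wedge (f g : StrongDual ℝ E) (v : E) : StrongDual ℝ E :=
  f v • g - g v • f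

theorem wedge_apply (f g : StrongDual ℝ E) (v x : E) :
    wedge f g v x = f v * g x - g v * f x := by
  simp [wedge]

theorem wedge_eq_of_add_eq_zero (h₀ : f + g + h = 0) : wedge g h = wedge f g := by
  obtain rfl : h = -(f + g) := (neg_eq_of_add_eq_zero_right h₀).symm
  ext v x
  simp only [wedge_apply, neg_apply, add_apply]
  ring

theorem eq_zero_of_wedge_eq_zero (hfg : LinearIndependent ℝ ![f, g]) (hv : wedge f g v = 0) :
    f v = 0 ∧ g v = 0 := by
  have := LinearIndependent.pair_iff.1 hfg (-g v) (f v) (by rw [← hv, wedge]; module)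
  simpa [and_comm] using this

/-- When `f` and `g` attain their maxima over a plane convex set at `p` and `q`, this is the closed
half-plane bounded by the line through `p` and `q` on the side opposite to the arc of the boundary
that runs between the supporting lines at `p` and `q`. -/
def chordHalfPlane (f g : StrongDual ℝ E) (p q : E) : Set E :=
  {x | wedge f g (p - q) x ≤ wedge f g (p - q) p}

theorem isClosed_chordHalfPlane (f g : StrongDual ℝ E) (p q : E) :
    IsClosed (chordHalfPlane f g p q) :=
  isClosed_le (wedge f g (p - q)).continuous continuous_const

theorem convex_chordHalfPlane (f g : StrongDual ℝ E) (p q : E) :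
    Convex ℝ (chordHalfPlane f g p q) :=
  convex_halfSpace_le (wedge f g (p - q)).isLinear _

theorem left_mem_chordHalfPlane (f g : StrongDual ℝ E) (p q : E) : p ∈ chordHalfPlane f g p q :=
  le_refl (wedge f g (p - q) p)

theorem right_mem_chordHalfPlane (f g : StrongDual ℝ E) (p q : E) : q ∈ chordHalfPlane f g p q := by
  simp only [chordHalfPlane, wedge_apply, map_sub, mem_ofPred_eq]
  exact le_of_eq (by ring)

theorem mem_chordHalfPlane_of_isMaxOn (h₀ : f + g + h = 0) (hp : p ∈ A) (hq : q ∈ A) (hr : r ∈ A)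
    (hf : IsMaxOn f A p) (hg : IsMaxOn g A q) (hh : IsMaxOn h A r) :
    r ∈ chordHalfPlane f g p q := by
  obtain rfl : h = -(f + g) := (neg_eq_of_add_eq_zero_right h₀).symm
  have hfq : 0 ≤ f p - f q := sub_nonneg.2 (hf hq)
  have hfr : 0 ≤ f p - f r := sub_nonneg.2 (hf hr)
  have hgp : 0 ≤ g q - g p := sub_nonneg.2 (hg hp)
  have hgr : 0 ≤ g q - g r := sub_nonneg.2 (hg hr)
  have hhp := sub_nonneg.2 (isMaxOn_iff.1 hh p hp)
  have hhq := sub_nonneg.2 (isMaxOn_iff.1 hh q hq)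
  simp only [neg_apply, add_apply] at hhp hhq
  simp only [chordHalfPlane, wedge_apply, map_sub, mem_ofPred_eq]
  rcases le_total (f q) (f r) with hqr | hrq
  · linarith [mul_nonneg (sub_nonneg.2 hqr) hhp, mul_nonneg hfr hhq]
  · linarith [mul_nonneg (sub_nonneg.2 hrq) hgp, mul_nonneg hfq hgr]

/-- For `f + g + h = 0` this is the triangle `p q r`, oriented by `f ∧ g = g ∧ h = h ∧ f`. -/
def chordTriangle (f g h : StrongDual ℝ E) (p q r : E) : Set E :=
  chordHalfPlane f g p q ∩ chordHalfPlane g h q r ∩ chordHalfPlane h f r p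

theorem convex_chordTriangle (f g h : StrongDual ℝ E) (p q r : E) :
    Convex ℝ (chordTriangle f g h p q r) :=
  ((convex_chordHalfPlane f g p q).inter (convex_chordHalfPlane g h q r)).inter
    (convex_chordHalfPlane h f r p)

theorem mem_chordTriangle_iff (h₀ : f + g + h = 0) {x : E} :
    x ∈ chordTriangle f g h p q r ↔ (0 ≤ wedge f g (p - q) (p - x) ∧
      0 ≤ wedge f g (q - r) (q - x)) ∧ 0 ≤ wedge f g (r - p) (r - x) := by
  simp only [chordTriangle, chordHalfPlane, mem_inter_iff, mem_ofPred_eq, map_sub, sub_nonneg,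
    wedge_eq_of_add_eq_zero h₀,
    wedge_eq_of_add_eq_zero (f := g) (g := h) (h := f) (by rw [← h₀]; abel)]

/-- The barycentric coordinates of `x` with respect to `p q r` are quotients of areas. -/
theorem wedge_smul_add_wedge_smul_add_wedge_smul [FiniteDimensional ℝ E] (hE : finrank ℝ E = 2)
    (hfg : LinearIndependent ℝ ![f, g]) (p q r x : E) :
    wedge f g (q - r) (q - x) • p + wedge f g (r - p) (r - x) • q + wedge f g (p - q) (p - x) • r =
      wedge f g (p - q) (p - r) • x := by
  apply eq_of_apply_eq_of_linearIndependent hE hfg <;>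
  · simp only [wedge_apply, map_add, map_smul, map_sub, smul_eq_mul]
    ring

theorem wedge_add_wedge_add_wedge (p q r x : E) :
    wedge f g (q - r) (q - x) + wedge f g (r - p) (r - x) + wedge f g (p - q) (p - x) =
      wedge f g (p - q) (p - r) := by
  simp only [wedge_apply, map_sub]
  ring

theorem chordTriangle_subset [FiniteDimensional ℝ E] (hE : finrank ℝ E = 2)
    (hfg : LinearIndependent ℝ ![f, g]) (h₀ : f + g + h = 0) (hA : Convex ℝ A) (hp : p ∈ A)
    (hq : q ∈ A) (hr : r ∈ A) (hD : 0 < wedge f g (p - q) (p - r)) :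
    chordTriangle f g h p q r ⊆ A := by
  intro x hx
  obtain ⟨⟨hpq, hqr⟩, hrp⟩ := (mem_chordTriangle_iff h₀).1 hx
  have hsum := wedge_add_wedge_add_wedge (f := f) (g := g) p q r x
  have hcomb := wedge_smul_add_wedge_smul_add_wedge_smul hE hfg p q r x
  set D := wedge f g (p - q) (p - r)
  have hx : ∑ i, ![wedge f g (q - r) (q - x) / D, wedge f g (r - p) (r - x) / D,
      wedge f g (p - q) (p - x) / D] i • ![p, q, r] i = x := by
    rw [← inv_smul_eq_iff₀ hD.ne'] at hcomb
    simpa only [Fin.sum_univ_three, Matrix.cons_val, smul_add, smul_smul, div_eq_inv_mul]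
      using hcomb
  rw [← hx]
  refine hA.sum_mem (fun i _ => ?_) ?_ fun i _ => ?_
  · fin_cases i <;> exact div_nonneg ‹_› hD.le
  · simp only [Fin.sum_univ_three, Matrix.cons_val, ← add_div, hsum, div_self hD.ne']
  · fin_cases i <;> assumption

end Functionals

section Haar

variable {E : Type*} [NormedAddCommGroup E] [NormedSpace ℝ E] [FiniteDimensional ℝ E]
  [MeasurableSpace E] [BorelSpace E] {μ : Measure E} [μ.IsAddHaarMeasure] {A B : Set E}
  {f g h : StrongDual ℝ E} {p q r : E}

theorem BonnesenPair.of_image {F : Type*} [NormedAddCommGroup F] [NormedSpace ℝ F]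
    [MeasurableSpace F] [BorelSpace F] {ν : Measure F} [ν.IsAddHaarMeasure] (e : E ≃L[ℝ] F)
    (h : BonnesenPair ν (e '' A) (e '' B)) : BonnesenPair μ A B := by
  have := e.symm.isAddHaarMeasure_map ν
  have happly (S : Set E) : μ S = μ.addHaarScalarFactor (ν.map e.symm) * ν (e '' S) := by
    conv_lhs => rw [Measure.isAddLeftInvariant_eq_smul μ (ν.map e.symm)]
    rw [Measure.smul_apply, e.image_eq_preimage_symm]
    exact congrArg _ (e.symm.toHomeomorph.measurableEmbedding.map_apply ν S)
  rw [BonnesenPair, happly, happly, happly, image_add, ← mul_add, mul_left_comm]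
  gcongr
  exact h

theorem BonnesenPair.of_image_eq (hE : finrank ℝ E = 2) (hA : IsCompact A) (hB : IsCompact B)
    (hf : f ≠ 0) (h : f '' A = f '' B) : BonnesenPair μ A B := by
  obtain ⟨e, he⟩ := exists_equiv_prod_fst_eq hE hf
  refine .of_image e (.of_image_fst_eq (hA.image e.continuous) (hB.image e.continuous) ?_)
  simpa only [image_image, he] using h

theorem BonnesenPair.of_isMinOn_of_isMaxOn (hE : finrank ℝ E = 2) (hA : IsCompact A)
    (hB : IsCompact B) (hBv : Convex ℝ B) (hBA : B ⊆ A) (hf : f ≠ 0) (hp : p ∈ B) (hq : q ∈ B)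
    (hmin : IsMinOn f A p) (hmax : IsMaxOn f A q) : BonnesenPair μ A B := by
  refine .of_image_eq hE hA hB hf (Subset.antisymm ?_ (image_mono hBA))
  rintro _ ⟨x, hx, rfl⟩
  exact hBv.isPreconnected.intermediate_value hp hq f.continuous.continuousOn ⟨hmin hx, hmax hx⟩

theorem measure_eq_const_eq_zero (hf : f ≠ 0) (c : ℝ) : μ {x | f x = c} = 0 := by
  obtain ⟨x₀, rfl⟩ := surjective_of_ne_zero hf c
  have hset : {x | f x = f x₀} = AffineSubspace.mk' x₀ f.ker := by
    ext x
    simp [AffineSubspace.mem_mk', sub_eq_zero]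
  rw [hset]
  refine Measure.addHaar_affineSubspace μ _ fun htop => hf ?_
  have := congr(AffineSubspace.direction $htop)
  rw [AffineSubspace.direction_mk', AffineSubspace.direction_top] at this
  exact ContinuousLinearMap.coe_injective (LinearMap.ker_eq_top.1 this)

theorem BonnesenPair.of_cut (hA : IsCompact A) (hB : IsCompact B) (hf : f ≠ 0) (c : ℝ)
    (hle : BonnesenPair μ (A ∩ {x | f x ≤ c}) (B ∩ {x | f x ≤ c}))
    (hge : BonnesenPair μ (A ∩ {x | c ≤ f x}) (B ∩ {x | c ≤ f x})) : BonnesenPair μ A B := by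
  set P := {x | f x ≤ c}
  set Q := {x | c ≤ f x}
  have hQ : IsClosed Q := isClosed_le continuous_const f.continuous
  have hmeas : MeasurableSet (A ∩ Q + B ∩ Q) :=
    ((hA.inter_right hQ).add (hB.inter_right hQ)).measurableSet
  have hsplit (S : Set E) : μ S ≤ μ (S ∩ P) + μ (S ∩ Q) :=
    (measure_mono fun x hx => (le_total (f x) c).imp (⟨hx, ·⟩) (⟨hx, ·⟩)).trans
      (measure_union_le _ _)
  have hoverlap : (A ∩ P + B ∩ P) ∩ (A ∩ Q + B ∩ Q) ⊆ {x | f x = 2 * c} := by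
    rintro _ ⟨⟨x, ⟨-, hx : f x ≤ c⟩, y, ⟨-, hy : f y ≤ c⟩, rfl⟩,
      x', ⟨-, hx' : c ≤ f x'⟩, y', ⟨-, hy' : c ≤ f y'⟩, hxy⟩
    have := congr(f $hxy)
    simp only [map_add, mem_ofPred_eq] at *
    linarith
  calc 2 * (μ A + μ B)
      ≤ 2 * ((μ (A ∩ P) + μ (A ∩ Q)) + (μ (B ∩ P) + μ (B ∩ Q))) := by gcongr <;> apply hsplit
    _ = 2 * (μ (A ∩ P) + μ (B ∩ P)) + 2 * (μ (A ∩ Q) + μ (B ∩ Q)) := by ring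
    _ ≤ μ (A ∩ P + B ∩ P) + μ (A ∩ Q + B ∩ Q) := add_le_add hle hge
    _ = μ ((A ∩ P + B ∩ P) ∪ (A ∩ Q + B ∩ Q)) := by
      rw [← measure_union_add_inter _ hmeas,
        measure_mono_null hoverlap (measure_eq_const_eq_zero hf _), add_zero]
    _ ≤ μ (A + B) := measure_mono (union_subset
      (add_subset_add inter_subset_left inter_subset_left)
      (add_subset_add inter_subset_left inter_subset_left))

theorem BonnesenPair.self (hE : finrank ℝ E = 2) (hA : Convex ℝ A) : BonnesenPair μ A A := by
  have hAA : A + A = (2 : ℝ) • A := by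
    simpa [one_add_one_eq_two] using (hA.add_smul zero_le_one zero_le_one).symm
  rw [BonnesenPair, hAA, Measure.addHaar_smul, hE, ← two_mul, ← mul_assoc]
  norm_num

/-- Slice by `f v • g + g v • f` with `v = p - q`: on the cap it is minimal at `p` and maximal at
`q`, because there it exceeds its value at `p` by at least `2 * (g q - g p) * (f p - f x)`. -/
theorem BonnesenPair.cap (hE : finrank ℝ E = 2) (hA : IsCompact A) (hB : IsCompact B)
    (hBv : Convex ℝ B) (hBA : B ⊆ A) (hfg : LinearIndependent ℝ ![f, g]) (hp : p ∈ B) (hq : q ∈ B)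
    (hf : IsMaxOn f A p) (hg : IsMaxOn g A q) (hω : wedge f g (p - q) ≠ 0) :
    BonnesenPair μ (A ∩ {x | wedge f g (p - q) p ≤ wedge f g (p - q) x})
      (B ∩ {x | wedge f g (p - q) p ≤ wedge f g (p - q) x}) := by
  set ω := wedge f g (p - q)
  have hcap : IsClosed {x | ω p ≤ ω x} := isClosed_le continuous_const ω.continuous
  have hfv : 0 ≤ f (p - q) := by simpa using hf (hBA hq)
  have hgv : g (p - q) ≤ 0 := by simpa using hg (hBA hp)
  have hslice : f (p - q) • g + g (p - q) • f ≠ 0 := fun h₀ => hω <| by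
    have := LinearIndependent.pair_iff.1 hfg (g (p - q)) (f (p - q)) (by rw [← h₀]; abel)
    simp [ω, wedge, this]
  have hωq : ω q = ω p := by
    simp only [ω, wedge_apply, map_sub]
    ring
  refine .of_isMinOn_of_isMaxOn hE (hA.inter_right hcap) (hB.inter_right hcap)
    (hBv.inter (convex_halfSpace_ge ω.isLinear _)) (inter_subset_inter_left _ hBA) hslice
    ⟨hp, le_refl (ω p)⟩ ⟨hq, hωq.ge⟩ ?_ ?_
  · rintro x ⟨hxA, hx : ω p ≤ ω x⟩
    have := mul_nonneg (neg_nonneg.2 hgv) (sub_nonneg.2 (hf hxA))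
    simp only [ω, wedge_apply, map_sub, add_apply, smul_apply, smul_eq_mul, mem_ofPred_eq] at *
    linarith
  · rintro x ⟨hxA, hx : ω p ≤ ω x⟩
    have := mul_nonneg hfv (sub_nonneg.2 (hg hxA))
    simp only [ω, wedge_apply, map_sub, add_apply, smul_apply, smul_eq_mul, mem_ofPred_eq] at *
    linarith

theorem BonnesenPair.of_inter_chordHalfPlane (hE : finrank ℝ E = 2) (hA : IsCompact A)
    (hB : IsCompact B) (hBv : Convex ℝ B) (hBA : B ⊆ A) (hfg : LinearIndependent ℝ ![f, g])
    (hp : p ∈ B) (hq : q ∈ B) (hf : IsMaxOn f A p) (hg : IsMaxOn g A q)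
    (h : BonnesenPair μ (A ∩ chordHalfPlane f g p q) (B ∩ chordHalfPlane f g p q)) :
    BonnesenPair μ A B := by
  by_cases hω : wedge f g (p - q) = 0
  · simpa [chordHalfPlane, hω] using h
  · exact .of_cut hA hB hω _ h (.cap hE hA hB hBv hBA hfg hp hq hf hg hω)

theorem measure_inter_chordTriangle_eq_zero (hfg : LinearIndependent ℝ ![f, g])
    (h₀ : f + g + h = 0) (hf : IsMaxOn f A p) (hg : IsMaxOn g A q) (hh : IsMaxOn h A r)
    (hD : wedge f g (p - q) (p - r) = 0) : μ (A ∩ chordTriangle f g h p q r) = 0 := by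
  suffices ∃ k : StrongDual ℝ E, k ≠ 0 ∧ ∀ x ∈ A ∩ chordTriangle f g h p q r, k x = k p by
    obtain ⟨k, hk, hconst⟩ := this
    exact measure_mono_null hconst (measure_eq_const_eq_zero hk (k p))
  by_cases hpq : wedge f g (p - q) = 0
  · by_cases hrp : wedge f g (r - p) = 0
    · obtain ⟨hfpq, hgpq⟩ := eq_zero_of_wedge_eq_zero hfg hpq
      obtain ⟨hfrp, hgrp⟩ := eq_zero_of_wedge_eq_zero hfg hrp
      refine ⟨f, hfg.ne_zero 0, fun x hx => ?_⟩
      obtain rfl : h = -(f + g) := (neg_eq_of_add_eq_zero_right h₀).symm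
      have hfx := isMaxOn_iff.1 hf x hx.1
      have hgx := isMaxOn_iff.1 hg x hx.1
      have hhx := isMaxOn_iff.1 hh x hx.1
      simp only [map_sub, neg_apply, add_apply] at *
      linarith
    · refine ⟨_, hrp, fun x hx => ?_⟩
      obtain ⟨⟨hpq', hqr'⟩, hrp'⟩ := (mem_chordTriangle_iff h₀).1 hx.2
      have := wedge_add_wedge_add_wedge (f := f) (g := g) p q r x
      have : wedge f g (r - p) (r - p) = 0 := by rw [wedge_apply]; ring
      simp only [map_sub] at *
      linarith
  · refine ⟨_, hpq, fun x hx => ?_⟩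
    obtain ⟨⟨hpq', hqr'⟩, hrp'⟩ := (mem_chordTriangle_iff h₀).1 hx.2
    have := wedge_add_wedge_add_wedge (f := f) (g := g) p q r x
    simp only [map_sub] at *
    linarith

theorem BonnesenPair.of_inter_chordTriangle (hE : finrank ℝ E = 2) (hA : IsCompact A)
    (hB : IsCompact B) (hBv : Convex ℝ B) (hBA : B ⊆ A) (hfg : LinearIndependent ℝ ![f, g])
    (h₀ : f + g + h = 0) (hp : p ∈ B) (hq : q ∈ B) (hr : r ∈ B) (hf : IsMaxOn f A p)
    (hg : IsMaxOn g A q) (hh : IsMaxOn h A r)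
    (hT : BonnesenPair μ (A ∩ chordTriangle f g h p q r) (B ∩ chordTriangle f g h p q r)) :
    BonnesenPair μ A B := by
  have h₁ : g + h + f = 0 := by rw [← h₀]; abel
  have hgh := linearIndependent_pair_of_add_eq_zero hfg h₀
  have hhf := linearIndependent_pair_of_add_eq_zero hgh h₁
  have hrpq := mem_chordHalfPlane_of_isMaxOn h₀ (hBA hp) (hBA hq) (hBA hr) hf hg hh
  have hpqr := mem_chordHalfPlane_of_isMaxOn h₁ (hBA hq) (hBA hr) (hBA hp) hg hh hf
  set P := chordHalfPlane f g p q
  set Q := chordHalfPlane g h q r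
  have hPc : IsClosed P := isClosed_chordHalfPlane f g p q
  have hQc : IsClosed Q := isClosed_chordHalfPlane g h q r
  have hPv : Convex ℝ P := convex_chordHalfPlane f g p q
  have hQv : Convex ℝ Q := convex_chordHalfPlane g h q r
  refine .of_inter_chordHalfPlane hE hA hB hBv hBA hfg hp hq hf hg ?_
  refine .of_inter_chordHalfPlane hE (hA.inter_right hPc) (hB.inter_right hPc) (hBv.inter hPv)
    (inter_subset_inter_left _ hBA) hgh ⟨hq, right_mem_chordHalfPlane f g p q⟩ ⟨hr, hrpq⟩
    (hg.on_subset inter_subset_left) (hh.on_subset inter_subset_left) ?_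
  rw [inter_assoc, inter_assoc]
  refine .of_inter_chordHalfPlane hE (hA.inter_right (hPc.inter hQc))
    (hB.inter_right (hPc.inter hQc)) (hBv.inter (hPv.inter hQv)) (inter_subset_inter_left _ hBA) hhf
    ⟨hr, hrpq, right_mem_chordHalfPlane g h q r⟩ ⟨hp, left_mem_chordHalfPlane f g p q, hpqr⟩
    (hh.on_subset inter_subset_left) (hf.on_subset inter_subset_left) ?_
  simpa only [chordTriangle, inter_assoc] using hT

theorem BonnesenPair.of_add_eq_zero (hE : finrank ℝ E = 2) (hA : IsCompact A) (hB : IsCompact B)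
    (hBv : Convex ℝ B) (hBA : B ⊆ A) (hfg : LinearIndependent ℝ ![f, g]) (h₀ : f + g + h = 0)
    (hp : p ∈ B) (hq : q ∈ B) (hr : r ∈ B) (hf : IsMaxOn f A p) (hg : IsMaxOn g A q)
    (hh : IsMaxOn h A r) : BonnesenPair μ A B := by
  refine .of_inter_chordTriangle hE hA hB hBv hBA hfg h₀ hp hq hr hf hg hh ?_
  have hD : 0 ≤ wedge f g (p - q) (p - r) := by
    rw [map_sub, sub_nonneg]
    exact mem_chordHalfPlane_of_isMaxOn h₀ (hBA hp) (hBA hq) (hBA hr) hf hg hh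
  rcases hD.lt_or_eq with hpos | hzero
  · have hTB := chordTriangle_subset hE hfg h₀ hBv hp hq hr hpos
    rw [inter_eq_right.2 hTB, inter_eq_right.2 (hTB.trans hBA)]
    exact .self hE (convex_chordTriangle f g h p q r)
  · exact .of_measure_eq_zero (inter_subset_inter_left _ hBA)
      (measure_inter_chordTriangle_eq_zero hfg h₀ hf hg hh hzero.symm)

end Haar

theorem exists_stdSimplex_of_mem_convexHull {V : Type*} [AddCommGroup V] [Module ℝ V]
    [FiniteDimensional ℝ V] {n : ℕ} (hn : finrank ℝ V < n) {S : Set V} {x : V}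
    (hx : x ∈ convexHull ℝ S) :
    ∃ w ∈ stdSimplex ℝ (Fin n), ∃ z : Fin n → V, (∀ i, z i ∈ S) ∧ ∑ i, w i • z i = x := by
  obtain ⟨z₀, hz₀⟩ : S.Nonempty := convexHull_nonempty_iff.1 ⟨x, hx⟩
  obtain ⟨ι, _, z, w, hzS, hz, hw, hw₁, rfl⟩ := eq_pos_convex_span_of_mem_convexHull hx
  have hcard : Fintype.card ι ≤ Fintype.card (Fin n) := by
    have := hz.card_le_finrank_succ
    have := Submodule.finrank_le (vectorSpan ℝ (range z))
    rw [Fintype.card_fin]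
    omega
  obtain ⟨e⟩ := Function.Embedding.nonempty_of_card_le hcard
  have hw_apply (i : ι) : Function.extend e w 0 (e i) = w i := e.injective.extend_apply _ _ _
  have hw_zero (j : Fin n) (hj : j ∉ range e) : Function.extend e w 0 j = 0 :=
    Function.extend_apply' _ _ _ hj
  refine ⟨Function.extend e w 0, ⟨fun j => ?_, ?_⟩, Function.extend e z fun _ => z₀, fun j => ?_,
    ?_⟩
  · by_cases hj : j ∈ range e
    · obtain ⟨i, rfl⟩ := hj
      exact (hw i).le.trans_eq (hw_apply i).symm
    · exact (hw_zero j hj).ge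
  · rw [← hw₁]
    exact (Fintype.sum_of_injective e e.injective _ _ hw_zero fun i => (hw_apply i).symm).symm
  · by_cases hj : j ∈ range e
    · obtain ⟨i, rfl⟩ := hj
      exact (e.injective.extend_apply z _ i).symm ▸ hzS ⟨i, rfl⟩
    · exact (Function.extend_apply' z _ _ hj).symm ▸ hz₀
  · refine (Fintype.sum_of_injective e e.injective _ _ (fun j hj => ?_) fun i => ?_).symm
    · rw [hw_zero j hj, zero_smul]
    · rw [hw_apply, e.injective.extend_apply]

theorem isCompact_convexHull {V : Type*} [NormedAddCommGroup V] [NormedSpace ℝ V]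
    [FiniteDimensional ℝ V] {S : Set V} (hS : IsCompact S) : IsCompact (convexHull ℝ S) := by
  let n := finrank ℝ V + 1
  have himage : convexHull ℝ S = (fun wz : (Fin n → ℝ) × (Fin n → V) => ∑ i, wz.1 i • wz.2 i) ''
      (stdSimplex ℝ (Fin n) ×ˢ univ.pi fun _ => S) := by
    ext x
    constructor
    · intro hx
      obtain ⟨w, hw, z, hz, hsum⟩ := exists_stdSimplex_of_mem_convexHull (Nat.lt_succ_self _) hx
      exact ⟨(w, z), ⟨hw, fun i _ => hz i⟩, hsum⟩
    · rintro ⟨⟨w, z⟩, ⟨hw, hz⟩, rfl⟩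
      exact (convex_convexHull ℝ S).sum_mem (fun i _ => hw.1 i) hw.2
        fun i _ => subset_convexHull ℝ S (hz i trivial)
  rw [himage]
  exact ((isCompact_stdSimplex ℝ (Fin n)).prod (isCompact_univ_pi fun _ => hS)).image (by fun_prop)

section Contact

variable {E : Type*} [NormedAddCommGroup E] [NormedSpace ℝ E] {A B : Set E} {r : ℝ} {x : E}

/-- The ratios of the homothetic copies of `B` contained in `A`; the supremum is the inradius of `A`
relative to `B`. -/
def homothetyRatios (A B : Set E) : Set ℝ :=
  {t | 0 ≤ t ∧ ∃ x, {x} + t • B ⊆ A}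

/-- The outer normals of `A`, as functionals, at the points where `B` touches the boundary of `A`
from inside; the zero functional is included. -/
def contactFunctionals (A B : Set E) : Set (StrongDual ℝ E) :=
  {f | ∃ p ∈ B, IsMaxOn f A p}

theorem singleton_add_smul_subset_iff {t : ℝ} : {x} + t • B ⊆ A ↔ ∀ b ∈ B, x + t • b ∈ A := by
  rw [singleton_add, ← image_smul, image_image, image_subset_iff]
  rfl

theorem smul_mem_contactFunctionals {c : ℝ} (hc : 0 ≤ c) {f : StrongDual ℝ E}
    (hf : f ∈ contactFunctionals A B) : c • f ∈ contactFunctionals A B := by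
  obtain ⟨p, hp, hmax⟩ := hf
  exact ⟨p, hp, fun x hx => mul_le_mul_of_nonneg_left (hmax hx) hc⟩

theorem isCompact_sphere_inter_contactFunctionals [FiniteDimensional ℝ E] (hB : IsCompact B) :
    IsCompact (Metric.sphere 0 1 ∩ contactFunctionals A B) := by
  have himage : Metric.sphere 0 1 ∩ contactFunctionals A B = Prod.fst ''
      ((Metric.sphere (0 : StrongDual ℝ E) 1 ×ˢ B) ∩ ⋂ x ∈ A, {fp | fp.1 x ≤ fp.1 fp.2}) := by
    ext f
    simp [contactFunctionals, IsMaxOn, IsMaxFilter, and_assoc]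
  rw [himage]
  refine (((isCompact_sphere 0 1).prod hB).inter_right ?_).image continuous_fst
  exact isClosed_biInter fun x _ => isClosed_le (by fun_prop) (by fun_prop)

theorem eventually_singleton_add_smul_subset_of_isOpen (hB : IsCompact B) (hA : IsOpen A)
    (h : {x} + r • B ⊆ A) : ∀ᶠ s in nhds r, {x} + s • B ⊆ A := by
  simp only [singleton_add_smul_subset_iff] at *
  refine hB.eventually_forall_of_forall_eventually fun b hb => ?_
  have hcont : Continuous fun z : ℝ × E => x + z.1 • z.2 := by fun_prop
  exact hcont.continuousAt.eventually_mem (hA.mem_nhds (h b hb))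

theorem exists_unit_functional_of_notMem_interior (hA : Convex ℝ A) (hA₀ : (interior A).Nonempty)
    (hx : x ∉ interior A) : ∃ f ∈ Metric.sphere (0 : StrongDual ℝ E) 1, ∀ a ∈ A, f a ≤ f x := by
  obtain ⟨f, hf, hle⟩ := geometric_hahn_banach_of_nonempty_interior_point hA hx hA₀
  refine ⟨‖f‖⁻¹ • f, ?_, fun a ha => mul_le_mul_of_nonneg_left (hle a ha) (by positivity)⟩
  simpa [norm_smul] using inv_mul_cancel₀ (norm_ne_zero_iff.2 hf)

theorem exists_singleton_add_subset_interior [FiniteDimensional ℝ E] (hA : Convex ℝ A)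
    (hA₀ : (interior A).Nonempty) (hB : IsCompact B) (hBA : B ⊆ A) {w : E}
    (hw : ∀ f ∈ Metric.sphere 0 1 ∩ contactFunctionals A B, 0 < f w) :
    ∃ v, {v} + B ⊆ interior A := by
  let M := (Metric.sphere (0 : StrongDual ℝ E) 1 ×ˢ B) ∩ {fb | fb.1 w ≤ 0}
  have hM : IsCompact M :=
    ((isCompact_sphere 0 1).prod hB).inter_right (isClosed_le (by fun_prop) continuous_const)
  have hexceed : ∀ᶠ ε : ℝ in nhds 0, ∀ fb ∈ M, ∃ a ∈ A, fb.1 (fb.2 - ε • w) < fb.1 a := by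
    refine hM.eventually_forall_of_forall_eventually fun ⟨f, b⟩ ⟨⟨hf, hb⟩, hfw⟩ => ?_
    obtain ⟨a, ha, hlt⟩ : ∃ a ∈ A, f b < f a := by
      by_contra! hmax
      exact hfw.not_gt (hw f ⟨hf, b, hb, hmax⟩)
    have hcont : Continuous fun z : ℝ × StrongDual ℝ E × E =>
        z.2.1 a - z.2.1 (z.2.2 - z.1 • w) := by fun_prop
    have hpos : 0 < f a - f (b - (0 : ℝ) • w) := by simpa using hlt
    filter_upwards [hcont.continuousAt.eventually_mem (Ioi_mem_nhds hpos)] with z hz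
    exact ⟨a, ha, sub_pos.1 hz⟩
  obtain ⟨ε, hε, hεM⟩ := hexceed.exists_gt
  refine ⟨-ε • w, ?_⟩
  rintro _ ⟨_, rfl, b, hb, rfl⟩
  by_contra hint
  obtain ⟨f, hf, hle⟩ := exists_unit_functional_of_notMem_interior hA hA₀ hint
  simp only [neg_smul, neg_add_eq_sub] at hle
  rcases le_or_gt (f w) 0 with hfw | hfw
  · obtain ⟨a, ha, hlt⟩ := hεM (f, b) ⟨⟨hf, hb⟩, hfw⟩
    exact hlt.not_ge (hle a ha)
  · have := hle b (hBA hb)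
    have := mul_pos hε hfw
    simp only [map_sub, map_smul, smul_eq_mul] at *
    linarith

theorem exists_apply_eq_of_strongDual_strongDual [FiniteDimensional ℝ E]
    (F : StrongDual ℝ (StrongDual ℝ E)) : ∃ w : E, ∀ f, F f = f w := by
  let e := LinearMap.toContinuousLinearMap (𝕜 := ℝ) (E := E) (F' := ℝ)
  refine ⟨(evalEquiv ℝ E).symm (F.toLinearMap ∘ₗ e), fun f => ?_⟩
  exact congr($((evalEquiv ℝ E).apply_symm_apply (F.toLinearMap ∘ₗ e)) f.toLinearMap).symm

theorem zero_mem_convexHull_contactFunctionals [FiniteDimensional ℝ E] (hA : Convex ℝ A)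
    (hA₀ : (interior A).Nonempty) (hB : IsCompact B) (hr : IsGreatest (homothetyRatios A B) r)
    (hx : {x} + r • B ⊆ A) :
    0 ∈ convexHull ℝ (Metric.sphere 0 1 ∩ contactFunctionals A ({x} + r • B)) := by
  have hC : IsCompact ({x} + r • B) := isCompact_singleton.add (hB.smul r)
  by_contra h₀
  obtain ⟨F, u, hu, hF⟩ := geometric_hahn_banach_point_closed (convex_convexHull ℝ _)
    (isCompact_convexHull (isCompact_sphere_inter_contactFunctionals hC)).isClosed h₀
  obtain ⟨w, hw⟩ := exists_apply_eq_of_strongDual_strongDual F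
  obtain ⟨v, hv⟩ := exists_singleton_add_subset_interior hA hA₀ hC hx fun f hf => by
    exact (hw f).symm ▸ map_zero F ▸ hu.trans (hF f (subset_convexHull ℝ _ hf))
  rw [← add_assoc, singleton_add_singleton] at hv
  obtain ⟨s, hrs, hs⟩ :=
    (eventually_singleton_add_smul_subset_of_isOpen hB isOpen_interior hv).exists_gt
  exact (hr.2 ⟨hr.1.1.trans hrs.le, _, hs.trans interior_subset⟩).not_gt hrs

theorem sInf_le_inv_of_mem_homothetyRatios {s : ℝ} (hs : s ∈ homothetyRatios A B) (hs₀ : s ≠ 0) :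
    sInf {t : ℝ | 0 ≤ t ∧ ∃ x, B ⊆ {x} + t • A} ≤ s⁻¹ := by
  obtain ⟨hs, x, hx⟩ := hs
  refine csInf_le ⟨0, fun t ht => ht.1⟩ ⟨inv_nonneg.2 hs, -(s⁻¹ • x), fun y hy => ?_⟩
  exact ⟨_, rfl, _, smul_mem_smul_set (singleton_add_smul_subset_iff.1 hx y hy),
    by simp [smul_smul, hs₀]⟩

theorem bddAbove_homothetyRatios (hA : Bornology.IsBounded A) (hB : IsCompact B)
    (hB₀ : B.Nontrivial) : BddAbove (homothetyRatios A B) := by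
  refine ⟨Metric.diam A / Metric.diam B, ?_⟩
  rintro t ⟨ht, x, hx⟩
  rw [le_div_iff₀ (Metric.diam_pos hB₀ hB.isBounded)]
  calc t * Metric.diam B = Metric.diam ({x} + t • B) := by
        rw [singleton_add, (isometry_add_left x).diam_image, diam_smul₀, Real.norm_of_nonneg ht]
    _ ≤ Metric.diam A := Metric.diam_mono hx hA

theorem isCompact_homothetyRatios (hA : IsCompact A) (hB : IsCompact B) (hB₀ : B.Nontrivial) :
    IsCompact (homothetyRatios A B) := by
  obtain ⟨M, hM⟩ := bddAbove_homothetyRatios hA.isBounded hB hB₀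
  obtain ⟨b₀, hb₀⟩ := hB₀.nonempty
  have himage : homothetyRatios A B = Prod.fst ''
      ((Icc 0 M ×ˢ A) ∩ ⋂ b ∈ B, {ty : ℝ × E | ty.2 + ty.1 • (b - b₀) ∈ A}) := by
    ext t
    constructor
    · rintro ⟨ht, x, hx⟩
      have hxA := singleton_add_smul_subset_iff.1 hx
      have htM : t ≤ M := hM ⟨ht, x, hx⟩
      refine ⟨(t, x + t • b₀), ⟨⟨⟨ht, htM⟩, hxA b₀ hb₀⟩, mem_iInter₂.2 fun b hb => ?_⟩, rfl⟩
      rw [mem_ofPred_eq, smul_sub, add_assoc, add_sub_cancel]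
      exact hxA b hb
    · rintro ⟨⟨t, y⟩, ⟨⟨⟨ht, -⟩, -⟩, hy⟩, rfl⟩
      refine ⟨ht, y - t • b₀, singleton_add_smul_subset_iff.2 fun b hb => ?_⟩
      rw [sub_add_eq_add_sub, add_sub_assoc, ← smul_sub]
      exact mem_iInter₂.1 hy b hb
  rw [himage]
  refine ((isCompact_Icc.prod hA).inter_right ?_).image continuous_fst
  exact isClosed_biInter fun b _ => hA.isClosed.preimage (by fun_prop)

theorem exists_pos_isGreatest_homothetyRatios (hA : IsCompact A) (hA₀ : (interior A).Nonempty)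
    (hB : IsCompact B) (hB₀ : B.Nontrivial) : ∃ r > 0, IsGreatest (homothetyRatios A B) r := by
  obtain ⟨x, hx⟩ := hA₀
  obtain ⟨ε, hε, hεA⟩ := (eventually_singleton_add_smul_subset (𝕜 := ℝ) hB.isBounded
    (mem_interior_iff_mem_nhds.1 hx)).exists_gt
  have hmem : ε ∈ homothetyRatios A B := ⟨hε.le, x, hεA⟩
  obtain ⟨r, hr⟩ := (isCompact_homothetyRatios hA hB hB₀).exists_isGreatest ⟨ε, hmem⟩
  exact ⟨r, hε.trans_le (hr.2 hmem), hr⟩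

end Contact

theorem linearIndependent_pair_or_exists_neg_mem {V : Type*} [AddCommGroup V] [Module ℝ V]
    {C : Set V} {f g h : V} (hf : f ∈ C) (hg : g ∈ C) (hh : h ∈ C) (h₀ : f + g + h = 0)
    (hne : f ≠ 0 ∨ g ≠ 0) (hC : ∀ c : ℝ, 0 ≤ c → ∀ x ∈ C, c • x ∈ C) :
    LinearIndependent ℝ ![f, g] ∨ ∃ k ≠ 0, k ∈ C ∧ -k ∈ C := by
  obtain rfl : h = -(f + g) := (neg_eq_of_add_eq_zero_right h₀).symm
  by_cases hf₀ : f = 0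
  · exact .inr ⟨g, hne.resolve_left (not_not.2 hf₀), hg, by simpa [hf₀] using hh⟩
  · refine or_iff_not_imp_left.2 fun hdep => ?_
    rw [LinearIndependent.pair_iff' hf₀] at hdep
    push Not at hdep
    obtain ⟨c, rfl⟩ := hdep
    refine ⟨f, hf₀, hf, ?_⟩
    rcases le_or_gt 0 c with hc | hc
    · convert hC (1 + c)⁻¹ (by positivity) _ hh using 1
      rw [eq_inv_smul_iff₀ (by positivity)]
      module
    · convert hC (-c)⁻¹ (by simpa using hc.le) _ hg using 1
      rw [eq_inv_smul_iff₀ (by simpa using hc.ne)]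
      module

section RelativeInradius

variable {E : Type*} [NormedAddCommGroup E] [NormedSpace ℝ E] [FiniteDimensional ℝ E]
  [MeasurableSpace E] [BorelSpace E] {μ : Measure E} [μ.IsAddHaarMeasure] {A B K L : Set E}

theorem BonnesenPair.of_neg_mem_contactFunctionals (hE : finrank ℝ E = 2) (hA : IsCompact A)
    (hB : IsCompact B) (hBv : Convex ℝ B) (hBA : B ⊆ A) {f : StrongDual ℝ E} (hf : f ≠ 0)
    (hpos : f ∈ contactFunctionals A B) (hneg : -f ∈ contactFunctionals A B) :
    BonnesenPair μ A B := by
  obtain ⟨p, hp, hmax⟩ := hpos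
  obtain ⟨q, hq, hmin⟩ := hneg
  refine .of_isMinOn_of_isMaxOn hE hA hB hBv hBA hf hq hp ?_ hmax
  exact fun x hx => neg_le_neg_iff.1 (isMaxOn_iff.1 hmin x hx)

theorem BonnesenPair.of_mem_contactFunctionals (hE : finrank ℝ E = 2) (hA : IsCompact A)
    (hB : IsCompact B) (hBv : Convex ℝ B) (hBA : B ⊆ A) {f g h : StrongDual ℝ E}
    (hf : f ∈ contactFunctionals A B) (hg : g ∈ contactFunctionals A B)
    (hh : h ∈ contactFunctionals A B) (h₀ : f + g + h = 0) (hne : f ≠ 0 ∨ g ≠ 0) :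
    BonnesenPair μ A B := by
  rcases linearIndependent_pair_or_exists_neg_mem hf hg hh h₀ hne
    fun c hc k hk => smul_mem_contactFunctionals hc hk with hfg | ⟨k, hk, hpos, hneg⟩
  · obtain ⟨p, hp, hpmax⟩ := hf
    obtain ⟨q, hq, hqmax⟩ := hg
    obtain ⟨r, hr, hrmax⟩ := hh
    exact .of_add_eq_zero hE hA hB hBv hBA hfg h₀ hp hq hr hpmax hqmax hrmax
  · exact .of_neg_mem_contactFunctionals hE hA hB hBv hBA hk hpos hneg

theorem BonnesenPair.of_zero_mem_convexHull (hE : finrank ℝ E = 2) (hA : IsCompact A)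
    (hB : IsCompact B) (hBv : Convex ℝ B) (hBA : B ⊆ A)
    (h₀ : 0 ∈ convexHull ℝ (Metric.sphere 0 1 ∩ contactFunctionals A B)) : BonnesenPair μ A B := by
  obtain ⟨w, ⟨hw, hw₁⟩, z, hz, hsum⟩ := exists_stdSimplex_of_mem_convexHull (n := 3)
    (by rw [finrank_strongDual, hE]; norm_num) h₀
  have hmem (i : Fin 3) : w i • z i ∈ contactFunctionals A B :=
    smul_mem_contactFunctionals (hw i) (hz i).2
  have hzero (i : Fin 3) : w i • z i = 0 → w i = 0 := fun h =>
    (smul_eq_zero.1 h).resolve_right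
      (ne_zero_of_mem_unit_sphere (⟨z i, (hz i).1⟩ : Metric.sphere (0 : StrongDual ℝ E) 1))
  rw [Fin.sum_univ_three] at hsum hw₁
  have hne : w 0 • z 0 ≠ 0 ∨ w 1 • z 1 ≠ 0 := by
    by_contra! ⟨h0, h1⟩
    have h2 : w 2 • z 2 = 0 := by simpa [h0, h1] using hsum
    simp [hzero 0 h0, hzero 1 h1, hzero 2 h2] at hw₁
  exact .of_mem_contactFunctionals hE hA hB hBv hBA (hmem 0) (hmem 1) (hmem 2) hsum hne

theorem BonnesenPair.smul (h : BonnesenPair μ A B) (c : ℝ) : BonnesenPair μ (c • A) (c • B) := by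
  rw [BonnesenPair, ← smul_add, Measure.addHaar_smul, Measure.addHaar_smul, Measure.addHaar_smul,
    ← mul_add, mul_left_comm]
  gcongr
  exact h

theorem BonnesenPair.of_isGreatest (hE : finrank ℝ E = 2) (hA : IsCompact A) (hAv : Convex ℝ A)
    (hA₀ : (interior A).Nonempty) (hB : IsCompact B) (hBv : Convex ℝ B) {r : ℝ}
    (hr : IsGreatest (homothetyRatios A B) r) : BonnesenPair μ A (r • B) := by
  obtain ⟨x, hx⟩ := hr.1.2
  have hcontact := zero_mem_convexHull_contactFunctionals hAv hA₀ hB hr hx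
  exact .of_singleton_add (.of_zero_mem_convexHull hE hA (isCompact_singleton.add (hB.smul r))
    ((convex_singleton x).add (hBv.smul r)) hx hcontact)

theorem BonnesenPair.quadratic_nonpos (hE : finrank ℝ E = 2) (hK : IsCompact K) (hL : IsCompact L)
    {t V : ℝ} (hV : (μ (L + t • K)).toReal =
      (μ L).toReal + 2 * t * V + t ^ 2 * (μ K).toReal) (h : BonnesenPair μ L (t • K)) :
    (μ L).toReal - 2 * t * V + t ^ 2 * (μ K).toReal ≤ 0 := by
  have hsum : 2 * (μ.real L + μ.real (t • K)) ≤ μ.real (L + t • K) := by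
    have hLK := ENNReal.toReal_mono (hL.add (hK.smul t)).measure_ne_top h
    rwa [ENNReal.toReal_mul, ENNReal.toReal_add hL.measure_ne_top (hK.smul t).measure_ne_top] at hLK
  simp only [measureReal_def, Measure.addHaar_smul, hE, ENNReal.toReal_mul,
    abs_of_nonneg (sq_nonneg t), ENNReal.toReal_ofReal (sq_nonneg t)] at hsum
  linarith

theorem quadratic_nonpos_of_mem_Icc {a b c r s t : ℝ} (hc : 0 ≤ c) (ht : t ∈ Icc r s)
    (hr : a - 2 * r * b + r ^ 2 * c ≤ 0) (hs : a - 2 * s * b + s ^ 2 * c ≤ 0) :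
    a - 2 * t * b + t ^ 2 * c ≤ 0 := by
  obtain ⟨u, v, hu, hv, huv, rfl⟩ := Icc_subset_segment (𝕜 := ℝ) ht
  obtain rfl : v = 1 - u := by linarith
  simp only [smul_eq_mul]
  have := mul_le_mul_of_nonneg_left hr hu
  have := mul_le_mul_of_nonneg_left hs hv
  have := mul_nonneg hc (mul_nonneg (mul_nonneg hu hv) (sq_nonneg (r - s)))
  linarith

theorem blaschke_bonnesen_general (hE : finrank ℝ E = 2)
    (hKc : IsCompact K) (hKv : Convex ℝ K) (hKint : (interior K).Nonempty)
    (hLc : IsCompact L) (hLv : Convex ℝ L) (hLint : (interior L).Nonempty) {V : ℝ}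
    (hV : ∀ s : ℝ, 0 ≤ s →
      (μ (L + s • K)).toReal = (μ L).toReal + 2 * s * V + s ^ 2 * (μ K).toReal) {t : ℝ}
    (ht : t ∈ Icc (sSup {t : ℝ | 0 ≤ t ∧ ∃ x, {x} + t • K ⊆ L})
      (sInf {t : ℝ | 0 ≤ t ∧ ∃ x, L ⊆ {x} + t • K})) :
    (μ L).toReal - 2 * t * V + t ^ 2 * (μ K).toReal ≤ 0 := by
  have : Nontrivial E := nontrivial_of_finrank_pos (R := ℝ) (by omega)
  have hnontrivial {S : Set E} : (interior S).Nonempty → S.Nontrivial := fun ⟨x, hx⟩ =>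
    have := Module.punctured_nhds_neBot ℝ E x
    (infinite_of_mem_nhds x (mem_interior_iff_mem_nhds.1 hx)).nontrivial
  obtain ⟨r, hr, hrmax⟩ := exists_pos_isGreatest_homothetyRatios hLc hLint hKc (hnontrivial hKint)
  obtain ⟨s, hs, hsmax⟩ := exists_pos_isGreatest_homothetyRatios hKc hKint hLc (hnontrivial hLint)
  have hinner : BonnesenPair μ L (r • K) := .of_isGreatest hE hLc hLv hLint hKc hKv hrmax
  have houter : BonnesenPair μ L (s⁻¹ • K) := by
    have := BonnesenPair.of_isGreatest (μ := μ) hE hKc hKv hKint hLc hLv hsmax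
    simpa [smul_smul, hs.ne'] using (this.smul s⁻¹).symm
  have hrt : r ≤ t := hrmax.csSup_eq ▸ ht.1
  have hts : t ≤ s⁻¹ := ht.2.trans (sInf_le_inv_of_mem_homothetyRatios hsmax.1 hs.ne')
  exact quadratic_nonpos_of_mem_Icc ENNReal.toReal_nonneg ⟨hrt, hts⟩
    (hinner.quadratic_nonpos hE hKc hLc (hV r hr.le))
    (houter.quadratic_nonpos hE hKc hLc (hV s⁻¹ (inv_pos.2 hs).le))

end RelativeInradius

/-- Blaschke's extension of the Bonnesen inequality.  `r` and `R` are the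
inradius and circumradius of `L` relative to `K`, and `V` is the mixed area, characterized
by `vol(L + sK) = vol L + 2s·V + s²·vol K` for `s ≥ 0`. -/
theorem blaschke_bonnesen (K L : Set (EuclideanSpace ℝ (Fin 2)))
    (hKc : IsCompact K) (hKv : Convex ℝ K) (hKint : (interior K).Nonempty)
    (hLc : IsCompact L) (hLv : Convex ℝ L) (hLint : (interior L).Nonempty)
    (V : ℝ)
    (hV : ∀ s : ℝ, 0 ≤ s →
      (volume (L + s • K)).toReal
        = (volume L).toReal + 2 * s * V + s ^ 2 * (volume K).toReal)
    (t : ℝ)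
    (ht : t ∈ Icc (sSup {t : ℝ | 0 ≤ t ∧ ∃ x, {x} + t • K ⊆ L})
                  (sInf {t : ℝ | 0 ≤ t ∧ ∃ x, L ⊆ {x} + t • K})) :
    (volume L).toReal - 2 * t * V + t ^ 2 * (volume K).toReal ≤ 0 :=
  blaschke_bonnesen_general (by simp) hKc hKv hKint hLc hLv hLint hV ht
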